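/- Let a > 0. For every x ∈ ℝ³ with x ≠ 0 the Laplacian of K_a satisfies ΔK_a(x) = −e^{−|x|/a}/(a²|x|), and K_a solves the homogeneous equation −ΔK_a(x) + a² Δ(ΔK_a)(x) = 0 on ℝ³ ∖ {0}. -/

import Mathlib

open MeasureTheory Real

noncomputable section

/-- Three dimensional Euclidean space. -/
abbrev E3 := EuclideanSpace ℝ (Fin 3)

/-- The Laplacian of a function on `ℝ³`, as the sum of the second partial derivatives. -/
def lap (f : E3 → ℝ) (x : E3) : ℝ :=
  ∑ i : Fin 3, fderiv ℝ (fun y => fderiv ℝ f y (EuclideanSpace.single i 1)) x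
    (EuclideanSpace.single i 1)

/-- The Bopp–Podolsky kernel `K_a(x) = (1 - e^{-|x|/a})/|x|`. -/
def K (a : ℝ) (x : E3) : ℝ := (1 - Real.exp (-‖x‖ / a)) / ‖x‖

/-!
In dimension `n`, `Δ (g(|x|)) = g''(|x|) + (n - 1)/|x| g'(|x|)`. For `n = 3` the substitution
`g(r) = u(r)/r` removes the first-order term and leaves `Δ (u(|x|)/|x|) = u''(|x|)/|x|`. Both `K_a`
and `ΔK_a` have this form, with `u(r)` affine in `e^{-r/a}`, and differentiating such a `u` twice
kills its constant term and multiplies the exponential by `a⁻²`.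
-/

open Filter InnerProductSpace Laplacian Module Topology

section Radial

variable {E F : Type*} [NormedAddCommGroup E] [InnerProductSpace ℝ E]
  [NormedAddCommGroup F] [NormedSpace ℝ F] {x : E}

theorem hasFDerivAt_norm (hx : x ≠ 0) :
    HasFDerivAt (fun y : E => ‖y‖) (‖x‖⁻¹ • innerSL ℝ x) x := by
  have hsqrt := (hasStrictFDerivAt_norm_sq x).hasFDerivAt.sqrt (by positivity)
  simp only [sqrt_sq (norm_nonneg _)] at hsqrt
  refine hsqrt.congr_fderiv ?_
  ext v
  simp only [one_div, mul_inv_rev, smul_apply, nsmul_eq_mul, Nat.cast_ofNat, smul_eq_mul]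
  field_simp

theorem hasFDerivAt_comp_norm {g : ℝ → F} {g' : F} (hx : x ≠ 0) (hg : HasDerivAt g g' ‖x‖) :
    HasFDerivAt (fun y : E => g ‖y‖) ((innerSL ℝ x).smulRight (‖x‖⁻¹ • g')) x := by
  refine (hg.hasFDerivAt.comp x (hasFDerivAt_norm hx)).congr_fderiv ?_
  ext v
  simp [smul_smul, mul_comm]

variable {g g' : ℝ → F} {g'' : F}

theorem hasFDerivAt_fderiv_comp_norm (hx : x ≠ 0)
    (hg : ∀ᶠ r in 𝓝 ‖x‖, HasDerivAt g (g' r) r) (hg' : HasDerivAt g' g'' ‖x‖) :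
    HasFDerivAt (fderiv ℝ fun y : E => g ‖y‖)
      ((ContinuousLinearMap.smulRightL ℝ E F).flip (‖x‖⁻¹ • g' ‖x‖) ∘L innerSL ℝ +
        (innerSL ℝ x).smulRight
          ((innerSL ℝ x).smulRight ((‖x‖ ^ 2)⁻¹ • (g'' - ‖x‖⁻¹ • g' ‖x‖)))) x := by
  have hfderiv : (fderiv ℝ fun y : E => g ‖y‖) =ᶠ[𝓝 x]
      fun y => ContinuousLinearMap.smulRightL ℝ E F (innerSL ℝ y) (‖y‖⁻¹ • g' ‖y‖) := by
    filter_upwards [continuous_norm.continuousAt.eventually hg, isOpen_ne.mem_nhds hx]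
      with y hgy hy using (hasFDerivAt_comp_norm hy hgy).fderiv
  have hcoeff : HasFDerivAt (fun y : E => ‖y‖⁻¹ • g' ‖y‖) _ x :=
    hasFDerivAt_comp_norm hx ((hasDerivAt_inv (norm_ne_zero_iff.mpr hx)).smul hg')
  have hinner : HasFDerivAt (fun y : E => innerSL ℝ y) (innerSL ℝ : E →L[ℝ] E →L[ℝ] ℝ) x :=
    (innerSL ℝ : E →L[ℝ] E →L[ℝ] ℝ).hasFDerivAt
  refine (((ContinuousLinearMap.smulRightL ℝ E F).hasFDerivAt_of_bilinear hinner
    hcoeff).congr_of_eventuallyEq hfderiv).congr_fderiv ?_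
  ext v w
  simp only [ContinuousLinearMap.precompR_apply, ContinuousLinearMap.precompL_apply,
    ContinuousLinearMap.smulRightL_apply_apply, ContinuousLinearMap.smulRight_apply,
    ContinuousLinearMap.comp_apply, ContinuousLinearMap.compL_apply,
    ContinuousLinearMap.flip_apply, add_apply, smul_apply]
  module

theorem fderiv_fderiv_comp_norm_apply (hx : x ≠ 0)
    (hg : ∀ᶠ r in 𝓝 ‖x‖, HasDerivAt g (g' r) r) (hg' : HasDerivAt g' g'' ‖x‖) (v w : E) :
    fderiv ℝ (fderiv ℝ fun y : E => g ‖y‖) x v w =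
      inner ℝ v w • ‖x‖⁻¹ • g' ‖x‖ +
        (inner ℝ x v * inner ℝ x w) • (‖x‖ ^ 2)⁻¹ • (g'' - ‖x‖⁻¹ • g' ‖x‖) := by
  rw [(hasFDerivAt_fderiv_comp_norm hx hg hg').fderiv, mul_smul]
  rfl

theorem laplacian_comp_norm [FiniteDimensional ℝ E] (hx : x ≠ 0)
    (hg : ∀ᶠ r in 𝓝 ‖x‖, HasDerivAt g (g' r) r) (hg' : HasDerivAt g' g'' ‖x‖) :
    Δ (fun y : E => g ‖y‖) x = g'' + ((finrank ℝ E - 1) / ‖x‖) • g' ‖x‖ := by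
  let b := stdOrthonormalBasis ℝ E
  have hx' : ‖x‖ ≠ 0 := norm_ne_zero_iff.mpr hx
  calc Δ (fun y : E => g ‖y‖) x
      = ∑ i, (‖x‖⁻¹ • g' ‖x‖ +
          inner ℝ x (b i) ^ 2 • (‖x‖ ^ 2)⁻¹ • (g'' - ‖x‖⁻¹ • g' ‖x‖)) := by
        rw [laplacian_eq_iteratedFDeriv_orthonormalBasis _ b]
        simp [iteratedFDeriv_two_apply, fderiv_fderiv_comp_norm_apply hx hg hg', ← sq]
    _ = (finrank ℝ E : ℝ) • ‖x‖⁻¹ • g' ‖x‖ + (g'' - ‖x‖⁻¹ • g' ‖x‖) := by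
        rw [Finset.sum_add_distrib, ← Finset.sum_smul (f := fun i => inner ℝ x (b i) ^ 2),
          b.sum_sq_inner_left, smul_inv_smul₀ (pow_ne_zero 2 hx')]
        simp [Nat.cast_smul_eq_nsmul]
    _ = g'' + ((finrank ℝ E - 1) / ‖x‖) • g' ‖x‖ := by
        module

end Radial

theorem lap_eq_laplacian {f : E3 → ℝ} {x : E3} (hf : DifferentiableAt ℝ (fderiv ℝ f) x) :
    lap f x = Δ f x := by
  rw [laplacian_eq_iteratedFDeriv_orthonormalBasis f (EuclideanSpace.basisFun (Fin 3) ℝ)]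
  simp [lap, iteratedFDeriv_two_apply, fderiv_clm_apply hf (differentiableAt_const _)]

theorem lap_congr_nhds {f₁ f₂ : E3 → ℝ} {x : E3} (h : f₁ =ᶠ[𝓝 x] f₂) : lap f₁ x = lap f₂ x := by
  refine Finset.sum_congr rfl fun i _ => ?_
  have hpartial : (fun y => fderiv ℝ f₁ y (EuclideanSpace.single i 1)) =ᶠ[𝓝 x]
      fun y => fderiv ℝ f₂ y (EuclideanSpace.single i 1) :=
    h.fderiv.mono fun _ hy => DFunLike.congr_fun hy _
  rw [hpartial.fderiv_eq]

theorem lap_comp_norm {g g' : ℝ → ℝ} {g'' : ℝ} {x : E3} (hx : x ≠ 0)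
    (hg : ∀ᶠ r in 𝓝 ‖x‖, HasDerivAt g (g' r) r) (hg' : HasDerivAt g' g'' ‖x‖) :
    lap (fun y => g ‖y‖) x = g'' + 2 / ‖x‖ * g' ‖x‖ := by
  rw [lap_eq_laplacian (hasFDerivAt_fderiv_comp_norm hx hg hg').differentiableAt,
    laplacian_comp_norm hx hg hg']
  norm_num

theorem lap_div_norm {u u' : ℝ → ℝ} {u'' : ℝ} {x : E3} (hx : x ≠ 0)
    (hu : ∀ᶠ r in 𝓝 ‖x‖, HasDerivAt u (u' r) r) (hu' : HasDerivAt u' u'' ‖x‖) :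
    lap (fun y => u ‖y‖ / ‖y‖) x = u'' / ‖x‖ := by
  have hx' : ‖x‖ ≠ 0 := norm_ne_zero_iff.mpr hx
  have hg : ∀ᶠ r in 𝓝 ‖x‖, HasDerivAt (fun r => u r / r) ((u' r * r - u r) / r ^ 2) r := by
    filter_upwards [hu, isOpen_ne.mem_nhds hx'] with r hur hr
    simpa using hur.fun_div (hasDerivAt_id' r) hr
  have hg' := ((hu'.fun_mul (hasDerivAt_id' ‖x‖)).fun_sub hu.self_of_nhds).div
    (hasDerivAt_pow 2 ‖x‖) (pow_ne_zero 2 hx')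
  rw [lap_comp_norm hx hg hg']
  simp only [Nat.cast_ofNat, Nat.add_one_sub_one, pow_one]
  field_simp
  ring

theorem hasDerivAt_exp_neg_div (a r : ℝ) :
    HasDerivAt (fun s => exp (-s / a)) (-exp (-r / a) / a) r :=
  ((hasDerivAt_id' r).fun_neg.div_const a).exp.congr_deriv (by ring)

theorem lap_add_mul_exp_div_norm (a A B : ℝ) {x : E3} (hx : x ≠ 0) :
    lap (fun y => (A + B * exp (-‖y‖ / a)) / ‖y‖) x = B * exp (-‖x‖ / a) / (a ^ 2 * ‖x‖) := by
  have hu (r : ℝ) : HasDerivAt (fun r => A + B * exp (-r / a)) (B * (-exp (-r / a) / a)) r :=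
    ((hasDerivAt_exp_neg_div a r).const_mul B).const_add A
  have hu' := ((hasDerivAt_exp_neg_div a ‖x‖).neg.div_const a).const_mul B
  rw [lap_div_norm hx (.of_forall hu) hu']
  ring

theorem lap_K (a : ℝ) {x : E3} (hx : x ≠ 0) :
    lap (K a) x = -exp (-‖x‖ / a) / (a ^ 2 * ‖x‖) := by
  have hK : K a = fun y => (1 + -1 * exp (-‖y‖ / a)) / ‖y‖ := by
    funext y
    rw [K]
    ring
  rw [hK, lap_add_mul_exp_div_norm a 1 (-1) hx]
  ring

theorem lap_lap_K (a : ℝ) {x : E3} (hx : x ≠ 0) :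
    lap (lap (K a)) x = lap (K a) x / a ^ 2 := by
  have hlap : lap (K a) =ᶠ[𝓝 x] fun y => (0 + -(a ^ 2)⁻¹ * exp (-‖y‖ / a)) / ‖y‖ := by
    filter_upwards [isOpen_ne.mem_nhds hx] with y hy
    rw [lap_K a hy]
    ring
  rw [lap_congr_nhds hlap, lap_add_mul_exp_div_norm a 0 _ hx, lap_K a hx]
  ring

/-- For `x ≠ 0`, `ΔK_a(x) = -e^{-|x|/a}/(a²|x|)` and `K_a` solves the homogeneous
equation `-ΔK_a + a²Δ²K_a = 0` away from the origin. -/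
theorem K_laplacian_and_homogeneous_equation (a : ℝ) (ha : 0 < a) :
    (∀ x : E3, x ≠ 0 → lap (K a) x = -Real.exp (-‖x‖ / a) / (a ^ 2 * ‖x‖)) ∧
    (∀ x : E3, x ≠ 0 → -(lap (K a) x) + a ^ 2 * lap (lap (K a)) x = 0) := by
  refine ⟨fun x hx => lap_K a hx, fun x hx => ?_⟩
  rw [lap_lap_K a hx, mul_div_cancel₀ _ (pow_ne_zero 2 ha.ne'), neg_add_cancel]
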